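/- There exists a constant C > 0 such that for every t > 0 and every Schwartz function f : ℝ³ → ℂ, the L⁶ norm satisfies (∫_{ℝ³} |f(x)|⁶ dx)^{1/6} ≤ (C/t) (∫_{ℝ³} ‖x f(x) + 2it ∇f(x)‖²_{ℂ³} dx)^{1/2}. -/

import Mathlib

open MeasureTheory SchwartzMap

noncomputable section

/-- Partial derivative in the `i`-th coordinate direction. -/
def pd {n : ℕ} (f : EuclideanSpace ℝ (Fin n) → ℂ) (i : Fin n)
    (x : EuclideanSpace ℝ (Fin n)) : ℂ :=
  fderiv ℝ f x (EuclideanSpace.single i 1)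

section helpers

open Filter Topology

/-- Cutoff functions with gradients tending to zero. -/
lemma exists_cutoff : ∃ M : ℝ, 0 ≤ M ∧ ∃ χ : ℕ → (EuclideanSpace ℝ (Fin 3)) → ℝ,
    (∀ n, ContDiff ℝ 1 (χ n)) ∧ (∀ n, HasCompactSupport (χ n)) ∧
    (∀ n x, |χ n x| ≤ 1) ∧ (∀ n x, ‖fderiv ℝ (χ n) x‖ ≤ ((n : ℝ) + 1)⁻¹ * M) ∧
    (∀ x, Tendsto (fun n => χ n x) atTop (𝓝 1)) := by
  let b : ContDiffBump (0 : (EuclideanSpace ℝ (Fin 3))) := ⟨1, 2, by norm_num, by norm_num⟩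
  have hb : ContDiff ℝ 1 b := b.contDiff
  obtain ⟨M, hM⟩ := (b.hasCompactSupport.fderiv (𝕜 := ℝ)).exists_bound_of_continuous
    (hb.continuous_fderiv one_ne_zero)
  have hpos : ∀ n : ℕ, (0 : ℝ) < ((n : ℝ) + 1)⁻¹ := fun n => by positivity
  refine ⟨M, (norm_nonneg _).trans (hM 0), fun n x => b (((n : ℝ) + 1)⁻¹ • x), ?_, ?_, ?_, ?_, ?_⟩
  · intro n
    exact hb.comp (contDiff_const_smul _)
  · intro n
    exact b.hasCompactSupport.comp_smul (hpos n).ne'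
  · intro n x
    rw [abs_of_nonneg b.nonneg]
    exact b.le_one
  · intro n x
    have h1 : HasFDerivAt (fun x : (EuclideanSpace ℝ (Fin 3)) => b (((n : ℝ) + 1)⁻¹ • x))
        ((fderiv ℝ b (((n : ℝ) + 1)⁻¹ • x)).comp (((n : ℝ) + 1)⁻¹ • ContinuousLinearMap.id ℝ (EuclideanSpace ℝ (Fin 3)))) x :=
      (hb.differentiable one_ne_zero _).hasFDerivAt.comp x (((((n : ℝ) + 1)⁻¹) • ContinuousLinearMap.id ℝ (EuclideanSpace ℝ (Fin 3))).hasFDerivAt (x := x))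
    rw [h1.fderiv, ContinuousLinearMap.comp_smul, ContinuousLinearMap.comp_id, norm_smul,
      Real.norm_of_nonneg (hpos n).le]
    exact mul_le_mul_of_nonneg_left (hM _) (hpos n).le
  · intro x
    have h0 : Tendsto (fun n : ℕ => ((n : ℝ) + 1)⁻¹) atTop (𝓝 0) := by
      simpa [one_div] using tendsto_one_div_add_atTop_nhds_zero_nat (𝕜 := ℝ)
    have h1 : Tendsto (fun n : ℕ => ((n : ℝ) + 1)⁻¹ • x) atTop (𝓝 0) := by
      simpa using h0.smul_const x
    have h2 := (hb.continuous.tendsto 0).comp h1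
    have h3 : b (0 : (EuclideanSpace ℝ (Fin 3))) = 1 := b.one_of_mem_closedBall (by simp [b])
    rw [h3] at h2
    exact h2

/-- Sobolev inequality in dimension three without compact support. -/
lemma sobolev_L6 (u : (EuclideanSpace ℝ (Fin 3)) → ℂ) (V : (EuclideanSpace ℝ (Fin 3)) → ℝ) (hu : ContDiff ℝ 1 u) (hu2 : MemLp u 2)
    (hV : MemLp V 2) (hVu : ∀ x, ‖fderiv ℝ u x‖ ≤ V x) :
    eLpNorm u 6 volume ≤
      eLpNormLESNormFDerivOfEqInnerConst (volume : Measure (EuclideanSpace ℝ (Fin 3))) 2 * eLpNorm V 2 volume := by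
  obtain ⟨M, hM0, χ, hχ, hχs, hχ1, hχd, hχt⟩ := exists_cutoff
  set K := eLpNormLESNormFDerivOfEqInnerConst (volume : Measure (EuclideanSpace ℝ (Fin 3))) 2
  have key : ∀ n, eLpNorm (fun x => χ n x • u x) 6 volume ≤
      K * (eLpNorm V 2 volume + ENNReal.ofReal (((n : ℝ) + 1)⁻¹ * M) * eLpNorm u 2 volume) := by
    intro n
    have hs := eLpNorm_le_eLpNorm_fderiv_of_eq_inner (volume : Measure (EuclideanSpace ℝ (Fin 3)))
      (u := fun x => χ n x • u x) ((hχ n).smul hu) ((hχs n).smul_right) (p := 2) (p' := 6)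
      (by norm_num) (by simp) (by simp; norm_num)
    refine hs.trans (mul_le_mul_right ?_ _)
    have hc : 0 ≤ ((n : ℝ) + 1)⁻¹ * M := by positivity
    calc eLpNorm (fderiv ℝ (fun x => χ n x • u x)) 2 volume
        ≤ eLpNorm (V + (((n : ℝ) + 1)⁻¹ * M) • fun x => ‖u x‖) 2 volume := by
          refine eLpNorm_mono_real fun x => ?_
          have hd := fderiv_fun_smul ((hχ n).differentiable one_ne_zero x)
            (hu.differentiable one_ne_zero x)
          rw [hd]
          refine (norm_add_le _ _).trans ?_
          rw [norm_smul, ContinuousLinearMap.norm_smulRight_apply, Real.norm_eq_abs]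
          refine add_le_add ?_ ?_
          · calc _ ≤ 1 * ‖fderiv ℝ u x‖ := mul_le_mul_of_nonneg_right (hχ1 n x) (norm_nonneg _)
              _ ≤ V x := by rw [one_mul]; exact hVu x
          · exact mul_le_mul_of_nonneg_right (hχd n x) (norm_nonneg _)
      _ ≤ _ := by
          refine (eLpNorm_add_le hV.1 (hu2.1.norm.const_smul _) (by norm_num)).trans ?_
          rw [eLpNorm_const_smul, eLpNorm_norm, Real.enorm_of_nonneg hc]
  have hlim : Tendsto (fun n : ℕ => (K : ENNReal) * (eLpNorm V 2 volume +
      ENNReal.ofReal (((n : ℝ) + 1)⁻¹ * M) * eLpNorm u 2 volume)) atTop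
      (𝓝 (K * eLpNorm V 2 volume)) := by
    have h0 : Tendsto (fun n : ℕ => ((n : ℝ) + 1)⁻¹ * M) atTop (𝓝 0) := by
      simpa [one_div] using (tendsto_one_div_add_atTop_nhds_zero_nat (𝕜 := ℝ)).mul_const M
    have h1 := ENNReal.tendsto_ofReal h0
    have h2 := ENNReal.Tendsto.mul_const h1 (Or.inr hu2.eLpNorm_ne_top)
    have h3 := ENNReal.Tendsto.const_mul (a := (K : ENNReal)) (h2.const_add (eLpNorm V 2 volume))
      (Or.inr ENNReal.coe_ne_top)
    simpa using h3
  have hf := Lp.eLpNorm_lim_le_liminf_eLpNorm (p := 6) (μ := (volume : Measure (EuclideanSpace ℝ (Fin 3))))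
    (f := fun n x => χ n x • u x)
    (fun n => ((hχ n).continuous.smul hu.continuous).aestronglyMeasurable) u
    (Eventually.of_forall fun x => by simpa using (hχt x).smul_const (u x))
  refine hf.trans ?_
  rw [← hlim.liminf_eq]
  exact liminf_le_liminf (Eventually.of_forall key)

/-- The operator norm is bounded by the Hilbert-Schmidt norm. -/
lemma opNorm_le_sqrt (L : EuclideanSpace ℝ (Fin 3) →L[ℝ] ℂ) :
    ‖L‖ ≤ √(∑ i, ‖L (EuclideanSpace.single i 1)‖ ^ 2) := by
  refine L.opNorm_le_bound (Real.sqrt_nonneg _) fun x => ?_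
  have hx : x = ∑ i, x i • EuclideanSpace.single i (1 : ℝ) := by
    ext j
    simp [Finset.sum_apply, Pi.single_apply]
  calc ‖L x‖ = ‖∑ i, x i • L (EuclideanSpace.single i 1)‖ := by
        conv_lhs => rw [hx]
        simp only [map_sum, map_smul]
    _ ≤ ∑ i, ‖L (EuclideanSpace.single i 1)‖ * ‖x i‖ := by
        refine (norm_sum_le _ _).trans (le_of_eq ?_)
        simp only [norm_smul, mul_comm]
    _ ≤ √(∑ i, ‖L (EuclideanSpace.single i 1)‖ ^ 2) * √(∑ i, ‖x i‖ ^ 2) :=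
        Real.sum_mul_le_sqrt_mul_sqrt _ _ _
    _ = _ := by rw [EuclideanSpace.norm_eq]

/-- The Galilean phase. -/
def galPhase (t : ℝ) (x : (EuclideanSpace ℝ (Fin 3))) : ℂ := Complex.exp (((-(‖x‖ ^ 2) / (4 * t) : ℝ) : ℂ) * Complex.I)

lemma norm_galPhase (t : ℝ) (x : (EuclideanSpace ℝ (Fin 3))) : ‖galPhase t x‖ = 1 := Complex.norm_exp_ofReal_mul_I _

lemma contDiff_galPhase (t : ℝ) : ContDiff ℝ 1 (galPhase t) := by
  unfold galPhase
  refine Complex.contDiff_exp.comp (ContDiff.mul ?_ contDiff_const)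
  exact Complex.ofRealCLM.contDiff.comp (((contDiff_norm_sq ℝ).neg).div_const _)

lemma pd_gal (t : ℝ) (ht : 0 < t) (f : (EuclideanSpace ℝ (Fin 3)) → ℂ) (x : (EuclideanSpace ℝ (Fin 3))) (hf : DifferentiableAt ℝ f x) (i : Fin 3) :
    ‖fderiv ℝ (fun y => galPhase t y * f y) x (EuclideanSpace.single i 1)‖ =
      (1 / (2 * t)) * ‖(x i : ℂ) * f x + 2 * Complex.I * (t : ℂ) * pd f i x‖ := by
  have h1 : HasFDerivAt (fun y : (EuclideanSpace ℝ (Fin 3)) => ‖y‖ ^ 2) _ x := (hasStrictFDerivAt_norm_sq x).hasFDerivAt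
  have h2 := (h1.neg.mul_const (1 / (4 * t)))
  have h3 := ((Complex.ofRealCLM.hasFDerivAt.comp x h2).mul_const Complex.I).cexp
  have hg : HasFDerivAt (galPhase t) (galPhase t x • Complex.I •
      Complex.ofRealCLM ∘SL ((1 / (4 * t)) • -(2 • (innerSL ℝ) x))) x := by
    convert! h3 using 1
    · funext y
      simp [galPhase, div_eq_mul_inv]
    · simp [galPhase, div_eq_mul_inv]
  have h5 := (hg.mul hf.hasFDerivAt).fderiv
  change fderiv ℝ (fun y => galPhase t y * f y) x = _ at h5
  have htC : (t : ℂ) ≠ 0 := by exact_mod_cast ht.ne'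
  have h6 : fderiv ℝ (fun y => galPhase t y * f y) x (EuclideanSpace.single i 1) =
      galPhase t x * (-Complex.I * ((1 / (2 * t) : ℝ) : ℂ)) *
        ((x i : ℂ) * f x + 2 * Complex.I * (t : ℂ) * pd f i x) := by
    rw [h5]
    simp [pd, EuclideanSpace.inner_single_right]
    field_simp
    ring_nf
    simp
    try ring
  rw [h6, norm_mul, norm_mul, norm_mul, norm_galPhase, norm_neg, Complex.norm_I, Complex.norm_real,
    Real.norm_of_nonneg (by positivity)]
  ring

open LineDeriv in
lemma integrable_conf (t : ℝ) (f : SchwartzMap (EuclideanSpace ℝ (Fin 3)) ℂ) (i : Fin 3) :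
    Integrable (fun x : (EuclideanSpace ℝ (Fin 3)) => ‖(x i : ℂ) * f x + 2 * Complex.I * (t : ℂ) * pd f i x‖ ^ 2) := by
  have hg : (fun x : (EuclideanSpace ℝ (Fin 3)) => x i).HasTemperateGrowth :=
    (EuclideanSpace.proj i : EuclideanSpace ℝ (Fin 3) →L[ℝ] ℝ).hasTemperateGrowth
  let F : SchwartzMap (EuclideanSpace ℝ (Fin 3)) ℂ := SchwartzMap.smulLeftCLM ℂ (fun x : (EuclideanSpace ℝ (Fin 3)) => x i) f +
    (2 * Complex.I * (t : ℂ)) • (∂_{EuclideanSpace.single i (1 : ℝ)} f)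
  have hF : ∀ x : (EuclideanSpace ℝ (Fin 3)), F x = (x i : ℂ) * f x + 2 * Complex.I * (t : ℂ) * pd f i x := by
    intro x
    simp [F, SchwartzMap.smulLeftCLM_apply_apply hg, SchwartzMap.lineDerivOp_apply_eq_fderiv, pd]
  have := (memLp_two_iff_integrable_sq_norm (F.memLp 2 volume).1).1 (F.memLp 2 volume)
  simpa only [hF] using this

end helpers

/-- The conformal factor controls the `L⁶` norm in dimension 3:
`‖f‖_{L⁶} ≤ (C/t) ‖(x−2pt)f‖_{L²}` for every `t > 0` and Schwartz `f`. -/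
theorem L6_bound_by_conformal_factor :
    ∃ C : ℝ, 0 < C ∧ ∀ t : ℝ, 0 < t →
      ∀ f : SchwartzMap (EuclideanSpace ℝ (Fin 3)) ℂ,
        (∫ x : EuclideanSpace ℝ (Fin 3), ‖f x‖ ^ 6) ^ ((1 : ℝ) / 6) ≤
          (C / t) * (∫ x : EuclideanSpace ℝ (Fin 3),
            ∑ i, ‖(x i : ℂ) * f x + 2 * Complex.I * (t : ℂ) * pd f i x‖ ^ 2)
              ^ ((1 : ℝ) / 2) := by
  set K := eLpNormLESNormFDerivOfEqInnerConst (volume : Measure (EuclideanSpace ℝ (Fin 3))) 2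
  refine ⟨K + 1, by positivity, fun t ht f => ?_⟩
  set S : EuclideanSpace ℝ (Fin 3) → ℝ := fun x =>
    ∑ i, ‖(x i : ℂ) * f x + 2 * Complex.I * (t : ℂ) * pd f i x‖ ^ 2 with hS
  have hS0 : ∀ x, 0 ≤ S x := fun x => Finset.sum_nonneg fun i _ => by positivity
  have hSi : Integrable S := integrable_finsetSum _ fun i _ => integrable_conf t f i
  have hVm : AEStronglyMeasurable (fun x => √(S x)) volume :=
    Real.continuous_sqrt.comp_aestronglyMeasurable hSi.1
  have hV : MemLp (fun x => √(S x)) 2 volume := by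
    rw [memLp_two_iff_integrable_sq hVm]
    simpa only [Real.sq_sqrt (hS0 _)] using hSi
  have hfd : ContDiff ℝ 1 f := f.smooth 1
  have hu : ContDiff ℝ 1 (fun y => galPhase t y * f y) := (contDiff_galPhase t).mul hfd
  have hn : ∀ y, ‖galPhase t y * f y‖ = ‖f y‖ := fun y => by
    rw [norm_mul, norm_galPhase, one_mul]
  have hu2 : MemLp (fun y => galPhase t y * f y) 2 volume :=
    (f.memLp 2 volume).of_le hu.continuous.aestronglyMeasurable
      (Filter.Eventually.of_forall fun y => (hn y).le)
  have hs := sobolev_L6 (fun y => galPhase t y * f y) ((1 / (2 * t)) • fun x => √(S x)) hu hu2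
    (hV.const_smul _) (fun x => by
      refine (opNorm_le_sqrt _).trans (le_of_eq ?_)
      simp only [pd_gal t ht f x (hfd.differentiable one_ne_zero x), mul_pow, ← Finset.mul_sum]
      rw [Real.sqrt_mul (by positivity), Real.sqrt_sq (by positivity)]
      rfl)
  have hc : 0 ≤ 1 / (2 * t) := by positivity
  rw [eLpNorm_congr_norm_ae (g := f) (Filter.Eventually.of_forall hn), eLpNorm_const_smul,
    (f.memLp 6 volume).eLpNorm_eq_integral_rpow_norm (by norm_num) (by norm_num),
    hV.eLpNorm_eq_integral_rpow_norm (by norm_num) (by norm_num), Real.enorm_of_nonneg hc,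
    ← ENNReal.ofReal_coe_nnreal, ← ENNReal.ofReal_mul (by positivity),
    ← ENNReal.ofReal_mul (by positivity), ENNReal.ofReal_le_ofReal_iff (by positivity)] at hs
  have e1 : ∀ x, ‖√(S x)‖ ^ (2 : ℝ) = S x := fun x => by
    rw [Real.norm_of_nonneg (Real.sqrt_nonneg _), Real.rpow_two, Real.sq_sqrt (hS0 x)]
  have e2 : ∀ x, ‖f x‖ ^ (6 : ℝ) = ‖f x‖ ^ 6 := fun x => by
    exact_mod_cast Real.rpow_natCast ‖f x‖ 6
  simp only [ENNReal.toReal_ofNat, e1, e2] at hs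
  rw [one_div, one_div]
  refine hs.trans ?_
  rw [← mul_assoc]
  refine mul_le_mul_of_nonneg_right ?_ (Real.rpow_nonneg (integral_nonneg hS0) _)
  have hK : (0 : ℝ) ≤ K := K.2
  rw [mul_one_div, div_le_div_iff₀ (by positivity) ht]
  nlinarith [mul_nonneg hK ht.le]

end
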